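/- (Complementarity reformulation of the variational inequality constraint.) Let c_p ∈ L²[t0,tf] with c_p(t) ≥ 0 for a.e. t, for each p ∈ P (for instance, the tolled effective delay c_p(t) = Ψ_p(t,h*) + ∑_a δ_{a,p} 𝒴_a evaluated at a fixed h*). Then h* ∈ Λ₀ satisfies ∑_{p∈P} ∫_{t0}^{tf} c_p(t)(h_p(t) − h*_p(t)) dt ≥ 0 for all h ∈ Λ₀ if and only if there exist real numbers μ_ij, (i,j) ∈ W, such that for every (i,j) ∈ W and every p ∈ P_ij: c_p(t) − μ_ij ≥ 0 for a.e. t ∈ [t0,tf], and (c_p(t) − μ_ij)·h*_p(t) = 0 for a.e. t ∈ [t0,tf]. -/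

import Mathlib

open MeasureTheory

/-- Lebesgue measure restricted to the planning horizon `[t0, tf]`. -/
noncomputable def timeMeasure (t0 tf : ℝ) : Measure ℝ :=
  volume.restrict (Set.Icc t0 tf)

/-- The feasible set of path flows `Λ₀ ⊆ (L²[t0,tf])^{|P|}`. -/
noncomputable def Lambda0 (t0 tf : ℝ) {W ι : Type} [Fintype ι] [DecidableEq W]
    (od : ι → W) (Q : W → ℝ) :
    Set (PiLp 2 fun _ : ι => Lp ℝ 2 (timeMeasure t0 tf)) :=
  {h | (∀ p, ∀ᵐ t ∂(timeMeasure t0 tf), 0 ≤ (h p) t) ∧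
    ∀ w, ∑ p ∈ Finset.univ.filter fun p => od p = w,
        ∫ t, (h p) t ∂(timeMeasure t0 tf) = Q w}

/-!
The multiplier of an origin–destination pair is its *minimal cost*, the least essential infimum of
the costs of its paths. Subtracting from each path cost the multiplier of its pair changes
`∑ p, ∫ c p * h p` by the same amount for all feasible `h`. Hence a feasible `k` solves the
variational inequality iff it minimizes the total of the resulting nonnegative reduced costs.
Sending all the demand along paths and at times whose reduced cost is below `ε` makes that total at
most `ε` times the demand, so the minimizer has total `0`, and its nonnegative integrands
`(c p - m (od p)) * k p` vanish almost everywhere.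
-/

open Filter
open scoped ENNReal

variable {Ω W ι : Type*} [MeasurableSpace Ω] {μ : Measure Ω} {r s : ℝ≥0∞}

section EssInf

theorem frequently_lt_of_essInf_lt [NeZero μ] {f : Ω → ℝ} {a : ℝ} (ha : essInf f μ < a) :
    ∃ᵐ ω ∂μ, f ω < a := by
  obtain ⟨n, hn⟩ : ∃ n : ℕ, ∃ᵐ ω ∂μ, f ω ≤ n := by
    by_contra! h
    obtain ⟨ω, hω⟩ := (ae_all_iff.2 h).exists
    obtain ⟨n, hn⟩ := exists_nat_ge (f ω)
    exact (hω n).not_ge hn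
  exact frequently_lt_of_liminf_lt (.of_frequently_le hn) ha

/-- The minimal cost of the origin–destination pair `w`: the least essential infimum of the costs
of its paths. It takes the value `0` if `w` has no path. -/
noncomputable def minCost (μ : Measure Ω) (od : ι → W) (c : ι → Ω → ℝ) (w : W) : ℝ :=
  ⨅ p : {p // od p = w}, essInf (c p) μ

theorem minCost_ae_le [Finite ι] (od : ι → W) (c : ι → Ω → ℝ) {p : ι}
    (hc : IsBoundedUnder (· ≥ ·) (ae μ) (c p)) : ∀ᵐ ω ∂μ, minCost μ od c (od p) ≤ c p ω := by
  have minCost_le : minCost μ od c (od p) ≤ essInf (c p) μ :=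
    ciInf_le (Set.finite_range _).bddBelow (⟨p, rfl⟩ : {q // od q = od p})
  filter_upwards [ae_essInf_le hc] with ω hω using minCost_le.trans hω

theorem exists_frequently_lt_of_minCost_lt [NeZero μ] {od : ι → W} (hod : Function.Surjective od)
    {c : ι → Ω → ℝ} {w : W} {a : ℝ} (ha : minCost μ od c w < a) :
    ∃ p, od p = w ∧ ∃ᵐ ω ∂μ, c p ω < a := by
  have : Nonempty {p // od p = w} := (hod w).elim fun p hp ↦ ⟨p, hp⟩
  obtain ⟨⟨p, hp⟩, hpa⟩ := exists_lt_of_ciInf_lt ha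
  exact ⟨p, hp, frequently_lt_of_essInf_lt hpa⟩

end EssInf

section FeasibleFlows

variable [Fintype ι] [DecidableEq W] {od : ι → W} {Q : W → ℝ}

/-- The feasible path flows in `(Lʳ(μ))^ι`: the analogue of `Lambda0` with an arbitrary measure
in place of Lebesgue measure on `[t0, tf]` and an arbitrary exponent. -/
def feasibleFlows (r : ℝ≥0∞) (μ : Measure Ω) (od : ι → W) (Q : W → ℝ) : Set (ι → Lp ℝ r μ) :=
  {h | (∀ p, ∀ᵐ ω ∂μ, 0 ≤ h p ω) ∧ ∀ w, ∑ p with od p = w, ∫ ω, h p ω ∂μ = Q w}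

theorem sum_mul_integral_eq_of_mem_feasibleFlows {h k : ι → Lp ℝ r μ}
    (hh : h ∈ feasibleFlows r μ od Q) (hk : k ∈ feasibleFlows r μ od Q) (m : W → ℝ) :
    ∑ p, m (od p) * ∫ ω, h p ω ∂μ = ∑ p, m (od p) * ∫ ω, k p ω ∂μ := by
  have sum_eq {g : ι → Lp ℝ r μ} (hg : g ∈ feasibleFlows r μ od Q) :
      ∑ p, m (od p) * ∫ ω, g p ω ∂μ = ∑ w ∈ Finset.univ.image od, m w * Q w := by
    rw [← Finset.sum_fiberwise_of_maps_to fun p hp ↦ Finset.mem_image_of_mem od hp]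
    refine Finset.sum_congr rfl fun w _ ↦ ?_
    rw [← hg.2 w, Finset.mul_sum]
    exact Finset.sum_congr rfl fun p hp ↦ by rw [(Finset.mem_filter.1 hp).2]
  rw [sum_eq hh, sum_eq hk]

section UniformFlow

variable [IsFiniteMeasure μ] {A : ι → Set Ω}

/-- The flow that spreads the demand of each origin–destination pair uniformly over the sets
`A p` of departure times of its paths `p`. -/
noncomputable def uniformFlow (r : ℝ≥0∞) (μ : Measure Ω) [IsFiniteMeasure μ] (od : ι → W)
    (Q : W → ℝ) (hA : ∀ p, MeasurableSet (A p)) (p : ι) : Lp ℝ r μ :=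
  indicatorConstLp r (hA p) (measure_ne_top μ (A p))
    (Q (od p) / ∑ q with od q = od p, μ.real (A q))

theorem uniformFlow_ae_nonneg (od : ι → W) (hQ : ∀ w, 0 ≤ Q w) (hA : ∀ p, MeasurableSet (A p))
    (p : ι) : ∀ᵐ ω ∂μ, 0 ≤ uniformFlow r μ od Q hA p ω := by
  have density_nonneg : 0 ≤ Q (od p) / ∑ q with od q = od p, μ.real (A q) :=
    div_nonneg (hQ _) (Finset.sum_nonneg fun _ _ ↦ measureReal_nonneg)
  have eq_indicator : uniformFlow r μ od Q hA p =ᵐ[μ]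
      (A p).indicator fun _ ↦ Q (od p) / ∑ q with od q = od p, μ.real (A q) :=
    indicatorConstLp_coeFn
  filter_upwards [eq_indicator] with ω hω
  exact hω ▸ Set.indicator_apply_nonneg fun _ ↦ density_nonneg

theorem uniformFlow_mem_feasibleFlows (hQ : ∀ w, 0 ≤ Q w) (hA : ∀ p, MeasurableSet (A p))
    (hpos : ∀ w, ∃ p, od p = w ∧ μ (A p) ≠ 0) :
    uniformFlow r μ od Q hA ∈ feasibleFlows r μ od Q := by
  refine ⟨uniformFlow_ae_nonneg od hQ hA, fun w ↦ ?_⟩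
  have total_pos : 0 < ∑ q with od q = w, μ.real (A q) := by
    obtain ⟨p, hp, hAp⟩ := hpos w
    exact Finset.sum_pos' (fun _ _ ↦ measureReal_nonneg)
      ⟨p, by simpa using hp, ENNReal.toReal_pos hAp (measure_ne_top μ _)⟩
  calc ∑ p with od p = w, ∫ ω, uniformFlow r μ od Q hA p ω ∂μ
      = ∑ p with od p = w, μ.real (A p) * (Q w / ∑ q with od q = w, μ.real (A q)) := by
        refine Finset.sum_congr rfl fun p hp ↦ ?_
        rw [uniformFlow, integral_indicatorConstLp, (Finset.mem_filter.1 hp).2, smul_eq_mul]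
    _ = Q w := by rw [← Finset.sum_mul, mul_div_cancel₀ _ total_pos.ne']

theorem uniformFlow_ae_eq_zero_of_notMem (od : ι → W) (Q : W → ℝ) (hA : ∀ p, MeasurableSet (A p))
    (p : ι) : ∀ᵐ ω ∂μ, ω ∉ A p → uniformFlow r μ od Q hA p ω = 0 :=
  indicatorConstLp_coeFn_notMem

end UniformFlow

end FeasibleFlows

section ReducedCost

variable {od : ι → W} {m : W → ℝ} {c : ι → Lp ℝ s μ}

/-- The total cost of the flow `h` after the cost of each path has been reduced by the multiplier
`m` of its origin–destination pair. -/
noncomputable def totalReducedCost [Fintype ι] (od : ι → W) (m : W → ℝ) (c : ι → Lp ℝ s μ)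
    (h : ι → Lp ℝ r μ) : ℝ :=
  ∑ p, ∫ ω, (c p ω - m (od p)) * h p ω ∂μ

theorem totalReducedCost_nonneg [Fintype ι] (hm : ∀ p, ∀ᵐ ω ∂μ, 0 ≤ c p ω - m (od p))
    {h : ι → Lp ℝ r μ} (hh : ∀ p, ∀ᵐ ω ∂μ, 0 ≤ h p ω) : 0 ≤ totalReducedCost od m c h := by
  refine Finset.sum_nonneg fun p _ ↦ integral_nonneg_of_ae ?_
  filter_upwards [hm p, hh p] with ω hmω hhω using mul_nonneg hmω hhω

variable [IsFiniteMeasure μ] [s.HolderConjugate r]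

theorem integrable_sub_const_mul (a : ℝ) (f : Lp ℝ s μ) (g : Lp ℝ r μ) :
    Integrable (fun ω ↦ (f ω - a) * g ω) μ :=
  ((Lp.memLp f).sub (memLp_const a)).integrable_mul (Lp.memLp g)

variable [Fintype ι]

theorem totalReducedCost_eq_zero_iff (hm : ∀ p, ∀ᵐ ω ∂μ, 0 ≤ c p ω - m (od p))
    {h : ι → Lp ℝ r μ} (hh : ∀ p, ∀ᵐ ω ∂μ, 0 ≤ h p ω) :
    totalReducedCost od m c h = 0 ↔ ∀ p, ∀ᵐ ω ∂μ, (c p ω - m (od p)) * h p ω = 0 := by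
  have integrand_nonneg (p : ι) : 0 ≤ᵐ[μ] fun ω ↦ (c p ω - m (od p)) * h p ω := by
    filter_upwards [hm p, hh p] with ω hmω hhω using mul_nonneg hmω hhω
  rw [totalReducedCost, Finset.sum_eq_zero_iff_of_nonneg
    fun p _ ↦ integral_nonneg_of_ae (integrand_nonneg p)]
  simp only [Finset.mem_univ, forall_const]
  exact forall_congr' fun p ↦ integral_eq_zero_iff_of_nonneg_ae (integrand_nonneg p)
    (integrable_sub_const_mul _ _ _)

theorem sum_integral_mul_eq_totalReducedCost_add (od : ι → W) (m : W → ℝ) (c : ι → Lp ℝ s μ)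
    (h : ι → Lp ℝ r μ) :
    ∑ p, ∫ ω, c p ω * h p ω ∂μ = totalReducedCost od m c h + ∑ p, m (od p) * ∫ ω, h p ω ∂μ := by
  rw [totalReducedCost, ← Finset.sum_add_distrib]
  refine Finset.sum_congr rfl fun p _ ↦ ?_
  have integrable_flow : Integrable (h p) μ :=
    (Lp.memLp (h p)).integrable (ENNReal.HolderConjugate.one_le r s)
  rw [← integral_const_mul, ← integral_add (integrable_sub_const_mul _ _ _)
    (integrable_flow.const_mul _)]
  exact integral_congr_ae (.of_forall fun ω ↦ by ring)

variable [DecidableEq W] {Q : W → ℝ}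

theorem sum_integral_mul_sub_eq_totalReducedCost_sub (m : W → ℝ) (c : ι → Lp ℝ s μ)
    {h k : ι → Lp ℝ r μ} (hh : h ∈ feasibleFlows r μ od Q) (hk : k ∈ feasibleFlows r μ od Q) :
    ∑ p, ∫ ω, c p ω * (h p ω - k p ω) ∂μ =
      totalReducedCost od m c h - totalReducedCost od m c k := by
  have integrable_cost (g : ι → Lp ℝ r μ) (p : ι) : Integrable (fun ω ↦ c p ω * g p ω) μ :=
    (Lp.memLp (c p)).integrable_mul (Lp.memLp (g p))
  calc ∑ p, ∫ ω, c p ω * (h p ω - k p ω) ∂μ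
      = ∑ p, ∫ ω, c p ω * h p ω ∂μ - ∑ p, ∫ ω, c p ω * k p ω ∂μ := by
        simp only [mul_sub, integral_sub (integrable_cost h _) (integrable_cost k _),
          Finset.sum_sub_distrib]
    _ = totalReducedCost od m c h - totalReducedCost od m c k := by
        rw [sum_integral_mul_eq_totalReducedCost_add od m,
          sum_integral_mul_eq_totalReducedCost_add od m,
          sum_mul_integral_eq_of_mem_feasibleFlows hh hk, add_sub_add_right_eq_sub]

theorem totalReducedCost_uniformFlow_le (hQ : ∀ w, 0 ≤ Q w) {A : ι → Set Ω}
    (hA : ∀ p, MeasurableSet (A p)) {ε : ℝ} (hε : ∀ p, ∀ ω ∈ A p, c p ω - m (od p) ≤ ε) :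
    totalReducedCost od m c (uniformFlow r μ od Q hA) ≤
      ε * ∑ p, ∫ ω, uniformFlow r μ od Q hA p ω ∂μ := by
  rw [totalReducedCost, Finset.mul_sum]
  refine Finset.sum_le_sum fun p _ ↦ ?_
  rw [← integral_const_mul]
  have integrable_flow : Integrable (uniformFlow r μ od Q hA p) μ :=
    (Lp.memLp _).integrable (ENNReal.HolderConjugate.one_le r s)
  refine integral_mono_ae (integrable_sub_const_mul _ _ _) (integrable_flow.const_mul ε) ?_
  filter_upwards [uniformFlow_ae_nonneg od hQ hA p,
    uniformFlow_ae_eq_zero_of_notMem (r := r) od Q hA p] with ω nonneg eq_zero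
  by_cases hω : ω ∈ A p
  · exact mul_le_mul_of_nonneg_right (hε p ω hω) nonneg
  · simp [eq_zero hω]

theorem exists_mem_feasibleFlows_totalReducedCost_le (hQ : ∀ w, 0 ≤ Q w) {ε : ℝ}
    (hcheap : ∀ w, ∃ p, od p = w ∧ ∃ᵐ ω ∂μ, c p ω < m w + ε) :
    ∃ h ∈ feasibleFlows r μ od Q, totalReducedCost od m c h ≤ ε * ∑ p, ∫ ω, h p ω ∂μ := by
  have hA (p : ι) : MeasurableSet {ω | c p ω < m (od p) + ε} :=
    measurableSet_lt (Lp.stronglyMeasurable (c p)).measurable measurable_const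
  have hpos (w : W) : ∃ p, od p = w ∧ μ {ω | c p ω < m (od p) + ε} ≠ 0 := by
    obtain ⟨p, rfl, hp⟩ := hcheap w
    exact ⟨p, rfl, frequently_ae_iff.1 hp⟩
  exact ⟨uniformFlow r μ od Q hA, uniformFlow_mem_feasibleFlows hQ hA hpos,
    totalReducedCost_uniformFlow_le hQ hA fun p ω hω ↦ sub_le_iff_le_add'.2 (le_of_lt hω)⟩

theorem totalReducedCost_nonpos_of_minimizer (hQ : ∀ w, 0 ≤ Q w)
    (hcheap : ∀ ε > 0, ∀ w, ∃ p, od p = w ∧ ∃ᵐ ω ∂μ, c p ω < m w + ε)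
    {k : ι → Lp ℝ r μ} (hk : k ∈ feasibleFlows r μ od Q)
    (hmin : ∀ h ∈ feasibleFlows r μ od Q, totalReducedCost od m c k ≤ totalReducedCost od m c h) :
    totalReducedCost od m c k ≤ 0 := by
  rw [← zero_mul (∑ p, ∫ ω, k p ω ∂μ)]
  refine le_mul_of_forall_lt₀ fun ε hε b hb ↦ ?_
  obtain ⟨h, hh, hhε⟩ := exists_mem_feasibleFlows_totalReducedCost_le (r := r) hQ (hcheap ε hε)
  have total_eq : ∑ p, ∫ ω, h p ω ∂μ = ∑ p, ∫ ω, k p ω ∂μ := by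
    simpa only [one_mul] using sum_mul_integral_eq_of_mem_feasibleFlows hh hk fun _ ↦ 1
  calc totalReducedCost od m c k ≤ totalReducedCost od m c h := hmin h hh
    _ ≤ ε * ∑ p, ∫ ω, k p ω ∂μ := total_eq ▸ hhε
    _ ≤ ε * b := mul_le_mul_of_nonneg_left hb.le hε.le

end ReducedCost

theorem vi_iff_complementarity_general [IsFiniteMeasure μ] [NeZero μ] [s.HolderConjugate r]
    [Fintype ι] [DecidableEq W] {od : ι → W} (hod : Function.Surjective od)
    {Q : W → ℝ} (hQ : ∀ w, 0 ≤ Q w) {k : ι → Lp ℝ r μ} (hk : k ∈ feasibleFlows r μ od Q)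
    {c : ι → Lp ℝ s μ} (hc : ∀ p, IsBoundedUnder (· ≥ ·) (ae μ) (c p)) :
    (∀ h ∈ feasibleFlows r μ od Q, 0 ≤ ∑ p, ∫ ω, c p ω * (h p ω - k p ω) ∂μ) ↔
    (∃ m : W → ℝ, ∀ p,
        (∀ᵐ ω ∂μ, 0 ≤ c p ω - m (od p)) ∧
        (∀ᵐ ω ∂μ, (c p ω - m (od p)) * k p ω = 0)) := by
  constructor
  · intro hVI
    let m := minCost μ od fun p ↦ c p
    have reduced_nonneg (p : ι) : ∀ᵐ ω ∂μ, 0 ≤ c p ω - m (od p) :=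
      (minCost_ae_le od (fun p ↦ c p) (hc p)).mono fun _ ↦ sub_nonneg.2
    have cheap (ε : ℝ) (hε : ε > 0) (w : W) : ∃ p, od p = w ∧ ∃ᵐ ω ∂μ, c p ω < m w + ε :=
      exists_frequently_lt_of_minCost_lt hod (lt_add_of_pos_right _ hε)
    have minimizer (h) (hh : h ∈ feasibleFlows r μ od Q) :
        totalReducedCost od m c k ≤ totalReducedCost od m c h :=
      sub_nonneg.1 (sum_integral_mul_sub_eq_totalReducedCost_sub m c hh hk ▸ hVI h hh)
    have cost_eq_zero : totalReducedCost od m c k = 0 :=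
      (totalReducedCost_nonpos_of_minimizer hQ cheap hk minimizer).antisymm
        (totalReducedCost_nonneg reduced_nonneg hk.1)
    have slack := (totalReducedCost_eq_zero_iff reduced_nonneg hk.1).1 cost_eq_zero
    exact ⟨m, fun p ↦ ⟨reduced_nonneg p, slack p⟩⟩
  · rintro ⟨m, hm⟩ h hh
    have reduced_nonneg (p : ι) := (hm p).1
    rw [sum_integral_mul_sub_eq_totalReducedCost_sub m c hh hk,
      (totalReducedCost_eq_zero_iff reduced_nonneg hk.1).2 fun p ↦ (hm p).2, sub_zero]
    exact totalReducedCost_nonneg reduced_nonneg hh.1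

instance isFiniteMeasure_timeMeasure (t0 tf : ℝ) : IsFiniteMeasure (timeMeasure t0 tf) :=
  inferInstanceAs (IsFiniteMeasure (volume.restrict (Set.Icc t0 tf)))

theorem timeMeasure_ne_zero {t0 tf : ℝ} (ht : t0 < tf) : timeMeasure t0 tf ≠ 0 := by
  simpa [timeMeasure, Measure.restrict_eq_zero] using ht

/-- **Complementarity reformulation of the variational inequality constraint.**
For nonnegative `L²` costs `c p` (e.g. the tolled effective delays evaluated at a
fixed `h*`), `h* ∈ Λ₀` solves the variational inequality iff there exist
multipliers `μ_{ij}` (one per OD pair) such that for every OD pair `w` and every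
path `p` connecting `w`: `c_p(t) - μ_w ≥ 0` a.e. and `(c_p(t) - μ_w)·h*_p(t) = 0`
a.e. on `[t0, tf]`. -/
theorem vi_iff_complementarity
    (t0 tf : ℝ) (ht : t0 < tf)
    (W ι : Type) [Fintype W] [Nonempty W] [DecidableEq W] [Fintype ι]
    (od : ι → W) (hod : Function.Surjective od)
    (Q : W → ℝ) (hQ : ∀ w, 0 ≤ Q w)
    (hstar : PiLp 2 fun _ : ι => Lp ℝ 2 (timeMeasure t0 tf))
    (hmem : hstar ∈ Lambda0 t0 tf od Q)
    (c : ι → Lp ℝ 2 (timeMeasure t0 tf))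
    (hc : ∀ p, ∀ᵐ t ∂(timeMeasure t0 tf), 0 ≤ (c p) t) :
    (∀ h ∈ Lambda0 t0 tf od Q,
        0 ≤ ∑ p, ∫ t, (c p) t * ((h p) t - (hstar p) t) ∂(timeMeasure t0 tf)) ↔
    (∃ μ : W → ℝ, ∀ p,
        (∀ᵐ t ∂(timeMeasure t0 tf), 0 ≤ (c p) t - μ (od p)) ∧
        (∀ᵐ t ∂(timeMeasure t0 tf), ((c p) t - μ (od p)) * (hstar p) t = 0)) := by
  have : NeZero (timeMeasure t0 tf) := ⟨timeMeasure_ne_zero ht⟩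
  exact (WithLp.toLp_surjective 2).forall.trans <|
    vi_iff_complementarity_general hod hQ hmem fun p ↦ isBoundedUnder_of_eventually_ge (hc p)
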